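/- Let s be a real number which is not an integer, and let a, z > 0 be real numbers with z ≠ 1. Then f_q(z, a q^{s}) tends to z^{−⌊s⌋}/(z − 1) as q tends to 0 from the right (q ranging over (0,1)), where ⌊s⌋ is the integer floor of s. -/

import Mathlib

open Filter Topology

/-- The q-theta function
`θ_q(x) = (x^{1/2} - x^{-1/2}) ∏_{i=1}^∞ (1 - x q^i)(1 - x⁻¹ q^i)`. -/
noncomputable def qTheta (q x : ℝ) : ℝ :=
  (Real.sqrt x - (Real.sqrt x)⁻¹) *
    ∏' i : ℕ, (1 - x * q ^ (i + 1)) * (1 - x⁻¹ * q ^ (i + 1))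

/-- `f_q(z, a) = θ_q(a z) / (θ_q(a) θ_q(z))`. -/
noncomputable def fTheta (q z a : ℝ) : ℝ :=
  qTheta q (a * z) / (qTheta q a * qTheta q z)

/-!
Write `θ_q(x) = (√x - 1/√x) P_q(x)`, where `P_q(x) = (q x; q)_∞ (q / x; q)_∞`. The quasi-periodicity
`θ_q(q x) = -θ_q(x) / (x √q)` gives `f_q(z, q a) = z⁻¹ f_q(z, a)`, so the integer part of `s`
contributes the factor `z ^ (-⌊s⌋)` and `s` may be replaced by its fractional part `t ∈ (0, 1)`.
For `x = a q ^ t` both `x` and `q / x` tend to `0`, hence every factor `P_q` in `f_q(z, x)` tends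
to `1`, and what remains is `(x z - 1) / ((x - 1) (z - 1)) → 1 / (z - 1)`.
-/

section QPochhammer

/-- The infinite `q`-Pochhammer symbol `(x; q)_∞`. The base `q` comes first, as in `qTheta`. -/
noncomputable def qPochhammer {R : Type*} [CommRing R] [TopologicalSpace R] (q x : R) : R :=
  ∏' i : ℕ, (1 - x * q ^ i)

@[simp]
lemma qPochhammer_zero_right {R : Type*} [CommRing R] [TopologicalSpace R] (q : R) :
    qPochhammer q 0 = 1 := by
  simp [qPochhammer]

variable {R : Type*} [NormedCommRing R] [NormOneClass R]

lemma norm_neg_mul_pow_le {q x : R} {r C : ℝ} (hq : ‖q‖ ≤ r) (hx : ‖x‖ ≤ C) (i : ℕ) :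
    ‖-(x * q ^ i)‖ ≤ C * r ^ i := by
  rw [norm_neg]
  have hqi : ‖q ^ i‖ ≤ r ^ i := (norm_pow_le q i).trans (by gcongr)
  exact norm_mul_le_of_le hx hqi

variable [CompleteSpace R]

lemma multipliable_one_sub_mul_pow {q : R} (hq : ‖q‖ < 1) (x : R) :
    Multipliable fun i : ℕ ↦ 1 - x * q ^ i := by
  simp only [sub_eq_add_neg]
  refine multipliable_one_add_of_summable ?_
  exact ((summable_geometric_of_lt_one (norm_nonneg q) hq).mul_left ‖x‖).of_nonneg_of_le
    (fun _ ↦ norm_nonneg _) (norm_neg_mul_pow_le le_rfl le_rfl)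

lemma qPochhammer_eq_one_sub_mul_qPochhammer {q : R} (hq : ‖q‖ < 1) (x : R) :
    qPochhammer q x = (1 - x) * qPochhammer q (q * x) := by
  have hshift (i : ℕ) : 1 - x * q ^ (i + 1) = 1 - q * x * q ^ i := by ring
  have hmul : Multipliable fun i : ℕ ↦ 1 - x * q ^ (i + 1) :=
    (multipliable_one_sub_mul_pow hq (q * x)).congr fun i ↦ (hshift i).symm
  calc qPochhammer q x
      = (1 - x * q ^ 0) * ∏' i : ℕ, (1 - x * q ^ (i + 1)) := tprod_eq_zero_mul' hmul
    _ = (1 - x) * qPochhammer q (q * x) := by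
      rw [pow_zero, mul_one, tprod_congr hshift, qPochhammer]

lemma continuousAt_qPochhammer {q : R} (hq : ‖q‖ < 1) (x : R) :
    ContinuousAt (fun p : R × R ↦ qPochhammer p.1 p.2) (q, x) := by
  obtain ⟨r, hqr, hr⟩ := exists_between hq
  have hbound : Summable fun i : ℕ ↦ (‖x‖ + 1) * r ^ i :=
    (summable_geometric_of_lt_one ((norm_nonneg q).trans hqr.le) hr).mul_left _
  simp only [ContinuousAt, qPochhammer, sub_eq_add_neg]
  refine tendsto_tprod_one_add_of_dominated_convergence hbound (fun i ↦ ?_) ?_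
  · exact Continuous.tendsto (f := fun p : R × R ↦ -(p.2 * p.1 ^ i)) (by fun_prop) (q, x)
  · have hfst : ∀ᶠ p in 𝓝 (q, x), ‖p.1‖ < r := continuousAt_fst.norm.eventually_lt_const hqr
    have hsnd : ∀ᶠ p in 𝓝 (q, x), ‖p.2‖ < ‖x‖ + 1 :=
      continuousAt_snd.norm.eventually_lt_const (lt_add_one _)
    filter_upwards [hfst, hsnd] with p hp₁ hp₂ using norm_neg_mul_pow_le hp₁.le hp₂.le

end QPochhammer

section QThetaProd

/-- The regular part `(q x; q)_∞ (q / x; q)_∞` of the `q`-theta function, namely `θ_q(x)` without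
its prefactor `√x - 1/√x`. -/
noncomputable def qThetaProd {𝕜 : Type*} [Field 𝕜] [TopologicalSpace 𝕜] (q x : 𝕜) : 𝕜 :=
  qPochhammer q (q * x) * qPochhammer q (q / x)

variable {𝕜 : Type*} [NormedField 𝕜] [CompleteSpace 𝕜]

lemma tprod_one_sub_mul_one_sub_inv_eq_qThetaProd {q : 𝕜} (hq : ‖q‖ < 1) (x : 𝕜) :
    ∏' i : ℕ, (1 - x * q ^ (i + 1)) * (1 - x⁻¹ * q ^ (i + 1)) = qThetaProd q x := by
  rw [qThetaProd, qPochhammer, qPochhammer, ← (multipliable_one_sub_mul_pow hq (q * x)).tprod_mul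
    (multipliable_one_sub_mul_pow hq (q / x))]
  exact tprod_congr fun i ↦ by ring

lemma one_sub_mul_qThetaProd_mul {q : 𝕜} (hq : ‖q‖ < 1) (hq₀ : q ≠ 0) (x : 𝕜) :
    (1 - q * x) * qThetaProd q (q * x) = (1 - x⁻¹) * qThetaProd q x := by
  have hdiv : q / (q * x) = x⁻¹ := div_mul_cancel_left₀ hq₀ x
  calc (1 - q * x) * qThetaProd q (q * x)
      = (1 - q * x) * qPochhammer q (q * (q * x)) * qPochhammer q x⁻¹ := by
        rw [qThetaProd, hdiv, mul_assoc]
    _ = qPochhammer q (q * x) * ((1 - x⁻¹) * qPochhammer q (q * x⁻¹)) := by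
        rw [← qPochhammer_eq_one_sub_mul_qPochhammer hq (q * x),
          ← qPochhammer_eq_one_sub_mul_qPochhammer hq x⁻¹]
    _ = (1 - x⁻¹) * qThetaProd q x := by
        rw [qThetaProd, div_eq_mul_inv, mul_left_comm]

lemma tendsto_qThetaProd_one {ι : Type*} {l : Filter ι} {q x : ι → 𝕜} (hq : Tendsto q l (𝓝 0))
    (hmul : Tendsto (fun i ↦ q i * x i) l (𝓝 0)) (hdiv : Tendsto (fun i ↦ q i / x i) l (𝓝 0)) :
    Tendsto (fun i ↦ qThetaProd (q i) (x i)) l (𝓝 1) := by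
  have hcont : Tendsto (fun p : 𝕜 × 𝕜 ↦ qPochhammer p.1 p.2) (𝓝 (0, 0)) (𝓝 1) := by
    simpa [ContinuousAt] using continuousAt_qPochhammer (q := (0 : 𝕜)) (by simp) 0
  simpa only [mul_one, qThetaProd, Function.comp_def] using
    (hcont.comp (hq.prodMk_nhds hmul)).mul (hcont.comp (hq.prodMk_nhds hdiv))

end QThetaProd

section Theta

variable {q x z : ℝ}

lemma qTheta_eq_div_sqrt_mul_qThetaProd (hq : |q| < 1) (x : ℝ) :
    qTheta q x = (x - 1) / √x * qThetaProd q x := by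
  have hsqrt : √x - (√x)⁻¹ = (x - 1) / √x := by
    rw [sub_div, Real.div_sqrt, one_div]
  rw [qTheta, tprod_one_sub_mul_one_sub_inv_eq_qThetaProd hq, hsqrt]

lemma qTheta_mul_left (hq₀ : 0 < q) (hq₁ : q < 1) (hx : 0 < x) :
    qTheta q (q * x) = -(x * √q)⁻¹ * qTheta q x := by
  have hq : |q| < 1 := by rwa [abs_of_pos hq₀]
  have hprod := one_sub_mul_qThetaProd_mul hq hq₀.ne' x
  calc qTheta q (q * x)
      = -((1 - q * x) * qThetaProd q (q * x)) / (√q * √x) := by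
        rw [qTheta_eq_div_sqrt_mul_qThetaProd hq, Real.sqrt_mul hq₀.le]
        ring
    _ = -((1 - x⁻¹) * qThetaProd q x) / (√q * √x) := by rw [hprod]
    _ = -(x * √q)⁻¹ * ((x - 1) / √x * qThetaProd q x) := by
        field_simp
    _ = -(x * √q)⁻¹ * qTheta q x := by rw [qTheta_eq_div_sqrt_mul_qThetaProd hq]

lemma fTheta_mul_left (hq₀ : 0 < q) (hq₁ : q < 1) (hz : 0 < z) (hx : 0 < x) :
    fTheta q z (q * x) = z⁻¹ * fTheta q z x := by
  rw [fTheta, fTheta, mul_assoc, qTheta_mul_left hq₀ hq₁ (mul_pos hx hz),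
    qTheta_mul_left hq₀ hq₁ hx]
  field_simp

lemma fTheta_zpow_mul_left (hq₀ : 0 < q) (hq₁ : q < 1) (hz : 0 < z) (hx : 0 < x) (n : ℤ) :
    fTheta q z (q ^ n * x) = z ^ (-n) * fTheta q z x := by
  have hstep (k : ℤ) : fTheta q z (q ^ (k + 1) * x) = z⁻¹ * fTheta q z (q ^ k * x) := by
    rw [zpow_add_one₀ hq₀.ne', mul_comm _ q, mul_assoc,
      fTheta_mul_left hq₀ hq₁ hz (by positivity)]
  induction n with
  | zero => simp
  | succ k ih => rw [hstep, ih, neg_add', zpow_sub_one₀ hz.ne', mul_comm _ z⁻¹, mul_assoc]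
  | pred k ih =>
    have h := hstep (-(k : ℤ) - 1)
    rw [sub_add_cancel, ih, eq_inv_mul_iff_mul_eq₀ hz.ne', ← mul_assoc, ← zpow_one_add₀ hz.ne'] at h
    rw [← h, neg_sub, sub_eq_add_neg]

lemma fTheta_eq_mul_qThetaProd (hq : |q| < 1) (hz : 0 < z) (hx : 0 < x) :
    fTheta q z x = (x * z - 1) / ((x - 1) * (z - 1)) *
      (qThetaProd q (x * z) / (qThetaProd q x * qThetaProd q z)) := by
  rw [fTheta, qTheta_eq_div_sqrt_mul_qThetaProd hq, qTheta_eq_div_sqrt_mul_qThetaProd hq,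
    qTheta_eq_div_sqrt_mul_qThetaProd hq, Real.sqrt_mul hx.le]
  field_simp

lemma tendsto_fTheta_inv_sub_one {ι : Type*} {l : Filter ι} {q x : ι → ℝ}
    (hx : Tendsto x l (𝓝[>] 0)) (hqx : Tendsto (fun i ↦ q i / x i) l (𝓝 0))
    (hz : 0 < z) (hz₁ : z ≠ 1) :
    Tendsto (fun i ↦ fTheta (q i) z (x i)) l (𝓝 (z - 1)⁻¹) := by
  obtain ⟨hx₀, hx_pos⟩ := tendsto_nhdsWithin_iff.1 hx
  have hq : Tendsto q l (𝓝 0) := by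
    have hmul : Tendsto (fun i ↦ q i / x i * x i) l (𝓝 0) := by simpa using hqx.mul hx₀
    refine hmul.congr' ?_
    filter_upwards [hx_pos] with i hi using div_mul_cancel₀ _ (ne_of_gt hi)
  have hP_xz : Tendsto (fun i ↦ qThetaProd (q i) (x i * z)) l (𝓝 1) :=
    tendsto_qThetaProd_one hq (by simpa using hq.mul (hx₀.mul_const z))
      (by simpa [div_div] using hqx.div_const z)
  have hP_x : Tendsto (fun i ↦ qThetaProd (q i) (x i)) l (𝓝 1) :=
    tendsto_qThetaProd_one hq (by simpa using hq.mul hx₀) hqx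
  have hP_z : Tendsto (fun i ↦ qThetaProd (q i) z) l (𝓝 1) :=
    tendsto_qThetaProd_one hq (by simpa using hq.mul_const z) (by simpa using hq.div_const z)
  have hz_sub : z - 1 ≠ 0 := sub_ne_zero.2 hz₁
  have hrat : Tendsto (fun i ↦ (x i * z - 1) / ((x i - 1) * (z - 1))) l (𝓝 (z - 1)⁻¹) := by
    have hlim : (0 * z - 1) / ((0 - 1) * (z - 1)) = (z - 1)⁻¹ := by
      field_simp
      ring
    rw [← hlim]
    exact ((hx₀.mul_const z).sub_const 1).div ((hx₀.sub_const 1).mul_const _)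
      (by simpa [sub_eq_zero] using hz₁.symm)
  have hlim := hrat.mul (hP_xz.div (hP_x.mul hP_z) (by simp))
  rw [mul_one, div_one, mul_one] at hlim
  refine hlim.congr' ?_
  have hq_lt : ∀ᶠ i in l, |q i| < 1 := hq.abs.eventually_lt_const (by simp)
  filter_upwards [hx_pos, hq_lt] with i hi hqi using (fTheta_eq_mul_qThetaProd hqi hz hi).symm

end Theta

lemma tendsto_rpow_nhdsGT_zero {t : ℝ} (ht : 0 < t) :
    Tendsto (fun q : ℝ ↦ q ^ t) (𝓝[>] 0) (𝓝[>] 0) := by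
  refine tendsto_nhdsWithin_iff.2 ⟨?_, ?_⟩
  · have h := (Real.continuousAt_rpow_const 0 t (Or.inr ht.le)).tendsto
    rw [Real.zero_rpow ht.ne'] at h
    exact h.mono_left nhdsWithin_le_nhds
  · filter_upwards [self_mem_nhdsWithin] with q hq using Real.rpow_pos_of_pos hq t

lemma tendsto_fTheta_mul_rpow {a z t : ℝ} (ha : 0 < a) (hz : 0 < z) (hz₁ : z ≠ 1)
    (ht₀ : 0 < t) (ht₁ : t < 1) :
    Tendsto (fun q : ℝ ↦ fTheta q z (a * q ^ t)) (𝓝[>] 0) (𝓝 (z - 1)⁻¹) := by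
  obtain ⟨hpow, hpow_pos⟩ := tendsto_nhdsWithin_iff.1 (tendsto_rpow_nhdsGT_zero ht₀)
  refine tendsto_fTheta_inv_sub_one (tendsto_nhdsWithin_iff.2 ⟨?_, ?_⟩) ?_ hz hz₁
  · simpa using hpow.const_mul a
  · filter_upwards [hpow_pos] with q hq using mul_pos ha hq
  · have hpow' : Tendsto (fun q : ℝ ↦ q ^ (1 - t) / a) (𝓝[>] 0) (𝓝 0) := by
      simpa using ((tendsto_rpow_nhdsGT_zero (sub_pos.2 ht₁)).mono_right
        nhdsWithin_le_nhds).div_const a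
    refine hpow'.congr' ?_
    filter_upwards [self_mem_nhdsWithin] with q hq
    rw [Real.rpow_sub hq, Real.rpow_one, div_div, mul_comm]

/-- For non-integer real `s` and reals `a, z > 0` with `z ≠ 1`,
`f_q(z, a q^s) → z^{-⌊s⌋} / (z - 1)` as `q → 0⁺`, with `q` ranging over `(0,1)`. -/
theorem fTheta_limit_nonintegral_kahler (s : ℝ) (hs : ∀ k : ℤ, s ≠ (k : ℝ))
    (a z : ℝ) (ha : 0 < a) (hz : 0 < z) (hz1 : z ≠ 1) :
    Tendsto (fun q : ℝ => fTheta q z (a * q ^ s))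
      (𝓝[Set.Ioo (0:ℝ) 1] 0) (𝓝 (z ^ (-⌊s⌋) / (z - 1))) := by
  have hfract : 0 < Int.fract s :=
    (Int.fract_nonneg s).lt_of_ne' (Int.fract_ne_zero_iff.2 fun ⟨k, hk⟩ ↦ hs k hk.symm)
  have hlim : Tendsto (fun q : ℝ ↦ z ^ (-⌊s⌋) * fTheta q z (a * q ^ Int.fract s))
      (𝓝[Set.Ioo (0 : ℝ) 1] 0) (𝓝 (z ^ (-⌊s⌋) / (z - 1))) := by
    rw [nhdsWithin_Ioo_eq_nhdsGT one_pos, div_eq_mul_inv]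
    exact (tendsto_fTheta_mul_rpow ha hz hz1 hfract (Int.fract_lt_one s)).const_mul _
  refine hlim.congr' ?_
  filter_upwards [self_mem_nhdsWithin] with q ⟨hq₀, hq₁⟩
  have hpow : a * q ^ s = q ^ ⌊s⌋ * (a * q ^ Int.fract s) := by
    rw [mul_left_comm, ← Real.rpow_intCast, ← Real.rpow_add hq₀, Int.floor_add_fract]
  rw [hpow, fTheta_zpow_mul_left hq₀ hq₁ hz (mul_pos ha (Real.rpow_pos_of_pos hq₀ _))]
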